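/- Let μ be a Borel probability measure on [0,1)^d which is mean (α,ρ)-porous, where α ∈ (0,1/2] and ρ ∈ (0,1]. Then for Lebesgue-almost every t ∈ [0,1/2)^d, the measure (1/4)μ + t (the image of μ under the map x ↦ x/4 + t) is dyadic mean (ℓ, 2^{−d}ρ)-porous, where ℓ = ⌈|log₂(α/(4√d))|⌉. -/

import Mathlib

open MeasureTheory Filter Metric Set
open scoped Classical

/-- `por(μ,x,r,ε)`: the supremum of `α ≥ 0` such that some ball `B(y,αr) ⊆ B(x,r)` has
`μ(B(y,αr)) ≤ ε·μ(B(x,r))` (an "ε-hole" of relative size `α`). -/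
noncomputable def porMeas {X : Type*} [MetricSpace X] [MeasurableSpace X]
    (μ : Measure X) (x : X) (r ε : ℝ) : ℝ :=
  sSup {α : ℝ | 0 ≤ α ∧ ∃ y, Metric.ball y (α * r) ⊆ Metric.ball x r ∧
    μ (Metric.ball y (α * r)) ≤ ENNReal.ofReal ε * μ (Metric.ball x r)}

/-- `μ` is mean `(α,ρ)`-porous: for every `ε > 0`, at `μ`-a.e. point the lower asymptotic
proportion of scales `i` with `por(μ,x,2^{-i},ε) > α` is at least `ρ`. -/
def IsMeanPorous {X : Type*} [MetricSpace X] [MeasurableSpace X]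
    (μ : Measure X) (α ρ : ℝ) : Prop :=
  ∀ ε : ℝ, 0 < ε → ∀ᵐ x ∂μ,
    ρ ≤ Filter.liminf (fun n : ℕ =>
      (((Finset.range n).filter fun i => α < porMeas μ x ((2 : ℝ) ^ (-(i : ℤ))) ε).card : ℝ) / n)
      atTop

/-- The half-open dyadic cell of level `n` with index `j`, i.e. `∏ᵢ [jᵢ/2ⁿ, (jᵢ+1)/2ⁿ)`. -/
def dyadicCell (d n : ℕ) (j : Fin d → ℤ) : Set (EuclideanSpace ℝ (Fin d)) :=
  {y | ∀ i, (j i : ℝ) / 2 ^ n ≤ y i ∧ y i < ((j i : ℝ) + 1) / 2 ^ n}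

/-- The index of the level-`n` dyadic cube containing `x`. -/
noncomputable def dyadicIdx (d n : ℕ) (x : EuclideanSpace ℝ (Fin d)) : Fin d → ℤ :=
  fun i => ⌊(2 : ℝ) ^ n * x i⌋

/-- `Q_n(x)`: the (unique) half-open dyadic cube of level `n` containing `x`. -/
noncomputable def Qcube (d n : ℕ) (x : EuclideanSpace ℝ (Fin d)) :
    Set (EuclideanSpace ℝ (Fin d)) :=
  dyadicCell d n (dyadicIdx d n x)

/-- The half-open unit cube `[0,1)^d`. -/
def unitCube (d : ℕ) : Set (EuclideanSpace ℝ (Fin d)) := dyadicCell d 0 0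

/-- `por₂(μ,x,n,ε)`: the least `ℓ'` such that some dyadic subcube `R` of `Q_n(x)` of
relative level `ℓ'` satisfies `μ(R) ≤ ε·μ(Q_n(x))`. -/
noncomputable def por2 (d : ℕ) (μ : Measure (EuclideanSpace ℝ (Fin d)))
    (x : EuclideanSpace ℝ (Fin d)) (n : ℕ) (ε : ℝ) : ℕ :=
  sInf {ℓ' : ℕ | ∃ k : Fin d → Fin (2 ^ ℓ'),
    μ (dyadicCell d (n + ℓ') (fun i => 2 ^ ℓ' * dyadicIdx d n x i + ((k i : ℕ) : ℤ))) ≤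
      ENNReal.ofReal ε * μ (Qcube d n x)}

/-- `μ` is dyadic mean `(ℓ,ρ)`-porous: for every `ε > 0`, at `μ`-a.e. point the lower
asymptotic proportion of scales `i` with `por₂(μ,x,i,ε) ≤ ℓ` is at least `ρ`. -/
def IsDyadicMeanPorous (d : ℕ) (μ : Measure (EuclideanSpace ℝ (Fin d)))
    (ℓ : ℕ) (ρ : ℝ) : Prop :=
  ∀ ε : ℝ, 0 < ε → ∀ᵐ x ∂μ,
    ρ ≤ Filter.liminf (fun n : ℕ =>
      (((Finset.range n).filter fun i => por2 d μ x i ε ≤ ℓ).card : ℝ) / n) atTop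

/-!
For a random translation `t`, the point `x/4 + t` lies in the central half of its dyadic cube of
side `2⁻ⁱ` with probability `2^{-d}`. These events are pairwise independent in `i`: in each
coordinate, a shift by half the side `2⁻ⁱ` exchanges the inner and outer halves at level `i` and
does not affect finer levels. The strong law of large numbers along the porous scales of a fixed
`x` thus keeps a proportion `2^{-d}` of them, and Fubini's theorem exchanges the almost every `x`
and the almost every `t`.

At a scale that is kept, the image of `B(x, 2⁻ⁱ)` is a ball of radius `2⁻ⁱ/4` inside the dyadic cube
`Q_i(x/4 + t)`, and the image of a hole `B(y, α 2⁻ⁱ)` contains the dyadic cube of side `2^{-(i+ℓ)}`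
around `y/4 + t`, whose diameter `√d 2^{-(i+ℓ)}` is at most `α 2⁻ⁱ/4` by the choice of `ℓ`.
-/

open ProbabilityTheory
open scoped Topology

section LowerDensity

/-- The relative frequency of `A` among the natural numbers below `n` (zero for `n = 0`). -/
noncomputable def relFreq (A : Set ℕ) (n : ℕ) : ℝ :=
  Nat.count (· ∈ A) n / n

/-- The lower asymptotic density of a set of natural numbers: the notion by which mean porosity
counts scales. -/
noncomputable def lowerDensity (A : Set ℕ) : ℝ :=
  liminf (relFreq A) atTop

theorem relFreq_setOf (p : ℕ → Prop) [DecidablePred p] :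
    relFreq {i | p i} = fun n => (((Finset.range n).filter p).card : ℝ) / n := by
  funext n
  rw [relFreq, Nat.count_eq_card_filter_range]
  congr!

theorem relFreq_nonneg (A : Set ℕ) (n : ℕ) : 0 ≤ relFreq A n := by
  rw [relFreq]; positivity

theorem relFreq_le_one (A : Set ℕ) (n : ℕ) : relFreq A n ≤ 1 :=
  div_le_one_of_le₀ (mod_cast Nat.count_le _) (by positivity)

theorem isBoundedUnder_ge_relFreq (A : Set ℕ) : IsBoundedUnder (· ≥ ·) atTop (relFreq A) :=
  isBoundedUnder_of ⟨0, relFreq_nonneg A⟩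

theorem isCoboundedUnder_ge_relFreq (A : Set ℕ) : IsCoboundedUnder (· ≥ ·) atTop (relFreq A) :=
  (isBoundedUnder_of ⟨1, relFreq_le_one A⟩).isCoboundedUnder_ge

theorem relFreq_mono {A B : Set ℕ} (h : A ⊆ B) (n : ℕ) : relFreq A n ≤ relFreq B n := by
  have hcount : Nat.count (· ∈ A) n ≤ Nat.count (· ∈ B) n := Nat.count_mono_left fun i _ hi => h hi
  rw [relFreq, relFreq]
  gcongr

theorem lowerDensity_nonneg (A : Set ℕ) : 0 ≤ lowerDensity A :=
  le_liminf_of_le (isCoboundedUnder_ge_relFreq A) (Eventually.of_forall (relFreq_nonneg A))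

theorem lowerDensity_mono {A B : Set ℕ} (h : A ⊆ B) : lowerDensity A ≤ lowerDensity B :=
  liminf_le_liminf (Eventually.of_forall (relFreq_mono h)) (isBoundedUnder_ge_relFreq A)
    (isCoboundedUnder_ge_relFreq B)

theorem lowerDensity_eq_zero_of_finite {A : Set ℕ} (hA : A.Finite) : lowerDensity A = 0 := by
  have hbound (n : ℕ) : Nat.count (· ∈ A) n ≤ hA.toFinset.card := by
    rw [Nat.count_eq_card_filter_range]
    exact Finset.card_le_card fun i hi => hA.mem_toFinset.2 (Finset.mem_filter.1 hi).2
  refine Tendsto.liminf_eq (squeeze_zero (relFreq_nonneg A) (fun n => ?_)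
    (tendsto_const_div_atTop_nhds_zero_nat (hA.toFinset.card : ℝ)))
  rw [relFreq]
  gcongr
  exact hbound n

theorem tendsto_count_atTop_of_infinite {A : Set ℕ} (hA : A.Infinite) :
    Tendsto (Nat.count (· ∈ A)) atTop atTop :=
  tendsto_atTop_atTop_of_monotone (Nat.count_monotone (· ∈ A)) fun b =>
    ⟨Nat.nth (· ∈ A) b, (Nat.count_nth_of_infinite (p := (· ∈ A)) hA b).ge⟩

theorem count_inter_eq_count_nth (A B : Set ℕ) [DecidablePred (· ∈ A ∩ B)] (n : ℕ) :
    Nat.count (· ∈ A ∩ B) n =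
      Nat.count (fun k => Nat.nth (· ∈ A) k ∈ B) (Nat.count (· ∈ A) n) := by
  induction n with
  | zero => simp only [Nat.count_zero]
  | succ n ih =>
    by_cases hn : n ∈ A
    · rw [Nat.count_succ, ih, Nat.count_succ (· ∈ A), if_pos hn, Nat.count_succ, Nat.nth_count hn]
      simp only [mem_inter_iff, hn, true_and]
    · rw [Nat.count_succ, ih, Nat.count_succ (· ∈ A), if_neg hn, if_neg fun h => hn h.1,
        add_zero, add_zero]

theorem relFreq_inter (A B : Set ℕ) (n : ℕ) :
    relFreq (A ∩ B) n =
      relFreq {k | Nat.nth (· ∈ A) k ∈ B} (Nat.count (· ∈ A) n) * relFreq A n := by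
  simp only [relFreq, count_inter_eq_count_nth, mem_ofPred_eq]
  rcases eq_or_ne (Nat.count (· ∈ A) n) 0 with h0 | h0
  · simp only [h0, Nat.count_zero, Nat.cast_zero, zero_div, mul_zero]
  · rw [div_mul_div_cancel₀ (Nat.cast_ne_zero.2 h0)]

theorem mul_lowerDensity_le_lowerDensity_inter {A B : Set ℕ} {p : ℝ} (hA : A.Infinite)
    (hB : Tendsto (relFreq {k | Nat.nth (· ∈ A) k ∈ B}) atTop (𝓝 p)) :
    p * lowerDensity A ≤ lowerDensity (A ∩ B) := by
  have hsub := hB.comp (tendsto_count_atTop_of_infinite hA)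
  rw [lowerDensity, lowerDensity, ← hsub.liminf_eq, funext (relFreq_inter A B)]
  exact le_liminf_mul (Eventually.of_forall fun n => relFreq_nonneg _ _) hsub.isBoundedUnder_le
    (Eventually.of_forall (relFreq_nonneg A)) (isCoboundedUnder_ge_relFreq A)

theorem measurable_lowerDensity_setOf_mem {Ω : Type*} [MeasurableSpace Ω] {G : ℕ → Set Ω}
    (hG : ∀ i, MeasurableSet (G i)) : Measurable fun ω => lowerDensity {i | ω ∈ G i} := by
  refine Measurable.liminf fun n => ?_
  simp only [relFreq_setOf, Finset.card_filter, Nat.cast_sum]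
  exact (Finset.measurable_sum _ fun i _ => measurable_from_top.comp
    (Measurable.ite (hG i) measurable_const measurable_const)).div_const _

end LowerDensity

section IndependentEvents

variable {Ω : Type*} [MeasurableSpace Ω] {P : Measure Ω}

theorem identDistrib_indicator_one {E F : Set Ω} (hE : MeasurableSet E) (hF : MeasurableSet F)
    [IsFiniteMeasure P] (h : P E = P F) :
    IdentDistrib (E.indicator (1 : Ω → ℝ)) (F.indicator (1 : Ω → ℝ)) P P := by
  have hmE : Measurable (E.indicator (1 : Ω → ℝ)) := measurable_one.indicator hE
  have hmF : Measurable (F.indicator (1 : Ω → ℝ)) := measurable_one.indicator hF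
  refine ⟨hmE.aemeasurable, hmF.aemeasurable, Measure.ext fun s hs => ?_⟩
  rw [Measure.map_apply hmE hs, Measure.map_apply hmF hs]
  have hcompl : P Eᶜ = P Fᶜ := by
    rw [measure_compl hE (by finiteness), measure_compl hF (by finiteness), h]
  change P ((E.indicator fun _ => 1) ⁻¹' s) = P ((F.indicator fun _ => 1) ⁻¹' s)
  simp only [indicator_const_preimage_eq_union]
  by_cases h1 : (1 : ℝ) ∈ s <;> by_cases h0 : (0 : ℝ) ∈ s <;>
    simp only [h1, h0, if_true, if_false, union_compl_self, union_empty, empty_union, h,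
      hcompl]

theorem indepFun_indicator_one {E F : Set Ω} (h : IndepSet E F P) :
    IndepFun (E.indicator (1 : Ω → ℝ)) (F.indicator (1 : Ω → ℝ)) P :=
  (IndepFun_iff_Indep _ _ _).2 <| indep_of_indep_of_le_left
    (indep_of_indep_of_le_right ((IndepSet_iff_Indep _ _ _).1 h)
      (MeasurableSpace.comap_indicator_const_le_generateFrom_singleton _ _))
    (MeasurableSpace.comap_indicator_const_le_generateFrom_singleton _ _)

theorem ae_tendsto_relFreq_of_pairwise_indepSet [IsProbabilityMeasure P] {E : ℕ → Set Ω}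
    (hE : ∀ i, MeasurableSet (E i)) (hindep : Pairwise fun i j => IndepSet (E i) (E j) P)
    (hprob : ∀ i, P (E i) = P (E 0)) :
    ∀ᵐ ω ∂P, Tendsto (relFreq {i | ω ∈ E i}) atTop (𝓝 (P.real (E 0))) := by
  have hlaw := strong_law_ae_real (μ := P) (fun i => (E i).indicator (1 : Ω → ℝ))
    ((integrable_const 1).indicator (hE 0)) (fun i j hij => indepFun_indicator_one (hindep hij))
    (fun i => identDistrib_indicator_one (hE i) (hE 0) (hprob i))
  filter_upwards [hlaw] with ω hω
  rw [integral_indicator_one (hE 0)] at hω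
  refine hω.congr fun n => ?_
  simp only [relFreq_setOf, indicator_apply, Pi.one_apply, Finset.sum_boole]

theorem ae_mul_lowerDensity_le_of_pairwise_indepSet [IsProbabilityMeasure P] {E : ℕ → Set Ω}
    (hE : ∀ i, MeasurableSet (E i)) (hindep : Pairwise fun i j => IndepSet (E i) (E j) P)
    {p : ℝ} (hprob : ∀ i, P.real (E i) = p) (A : Set ℕ) :
    ∀ᵐ ω ∂P, p * lowerDensity A ≤ lowerDensity {i ∈ A | ω ∈ E i} := by
  by_cases hA : A.Finite
  · exact Eventually.of_forall fun ω => by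
      simpa only [lowerDensity_eq_zero_of_finite hA, mul_zero] using lowerDensity_nonneg _
  · have hlaw := ae_tendsto_relFreq_of_pairwise_indepSet (P := P)
      (fun k => hE (Nat.nth (· ∈ A) k))
      (fun j k hjk => hindep ((Nat.nth_injective hA).ne hjk))
      (fun k => (measureReal_eq_measureReal_iff ..).1 ((hprob _).trans (hprob _).symm))
    filter_upwards [hlaw] with ω hω
    rw [hprob] at hω
    exact mul_lowerDensity_le_lowerDensity_inter (B := {i | ω ∈ E i}) hA hω

theorem two_mul_measure_inter_of_preimage_eq_compl {f : Ω → Ω} (hf : MeasurePreserving f P P)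
    {S T : Set Ω} (hS : MeasurableSet S) (hT : MeasurableSet T) (hfS : f ⁻¹' S = Sᶜ)
    (hfT : f ⁻¹' T = T) : 2 * P (S ∩ T) = P T := by
  have hswap : P (T \ S) = P (S ∩ T) := by
    rw [← hf.measure_preimage (hS.inter hT).nullMeasurableSet, preimage_inter, hfS, hfT,
      inter_comm, sdiff_eq]
  rw [two_mul, ← measure_inter_add_sdiff T hS, hswap, inter_comm]

theorem indepSet_of_preimage_eq_compl [IsProbabilityMeasure P] {f : Ω → Ω}
    (hf : MeasurePreserving f P P) {S T : Set Ω} (hS : MeasurableSet S) (hT : MeasurableSet T)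
    (hfS : f ⁻¹' S = Sᶜ) (hfT : f ⁻¹' T = T) : IndepSet S T P := by
  have hST := two_mul_measure_inter_of_preimage_eq_compl hf hS hT hfS hfT
  have hS1 : 2 * P S = 1 := by
    simpa using two_mul_measure_inter_of_preimage_eq_compl hf hS .univ hfS preimage_univ
  rw [indepSet_iff_measure_inter_eq_mul hS hT P, ← hST, ← mul_assoc, mul_comm (P S), hS1, one_mul]

theorem indepSet_preimage {Ω' : Type*} [MeasurableSpace Ω'] {Q : Measure Ω'}
    [IsZeroOrProbabilityMeasure Q] {f : Ω' → Ω}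
    (hf : MeasurePreserving f Q P) {S T : Set Ω} (hS : MeasurableSet S) (hT : MeasurableSet T)
    (h : IndepSet S T P) : IndepSet (f ⁻¹' S) (f ⁻¹' T) Q := by
  rw [indepSet_iff_measure_inter_eq_mul (hf.measurable hS) (hf.measurable hT) Q, ← preimage_inter,
    hf.measure_preimage (hS.inter hT).nullMeasurableSet, hf.measure_preimage hS.nullMeasurableSet,
    hf.measure_preimage hT.nullMeasurableSet, h.measure_inter_eq_mul]

theorem indepSet_univ_pi {ι : Type*} [Fintype ι] {X : ι → Type*} [∀ k, MeasurableSpace (X k)]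
    {μ : ∀ k, Measure (X k)} [∀ k, IsProbabilityMeasure (μ k)] {S T : ∀ k, Set (X k)}
    (hS : ∀ k, MeasurableSet (S k)) (hT : ∀ k, MeasurableSet (T k))
    (h : ∀ k, IndepSet (S k) (T k) (μ k)) :
    IndepSet (univ.pi S) (univ.pi T) (Measure.pi μ) := by
  rw [indepSet_iff_measure_inter_eq_mul (.univ_pi hS) (.univ_pi hT) _, ← pi_inter_distrib]
  simp only [Measure.pi_pi, (h _).measure_inter_eq_mul, Finset.prod_mul_distrib]

end IndependentEvents

section Torus

/-- The middle half `[1/4, 3/4)` of the circle `ℝ/ℤ`. It is taken half-open so that the rotation by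
`1/2` exchanges it with its complement exactly, not just up to a null set. -/
noncomputable def centralArc : Set UnitAddCircle :=
  {θ | (AddCircle.equivIco 1 0 θ : ℝ) ∈ Ico (1 / 4 : ℝ) (3 / 4)}

theorem measurableSet_centralArc : MeasurableSet centralArc :=
  (measurable_subtype_coe.comp (AddCircle.measurableEquivIco 1 0).measurable) measurableSet_Ico

theorem coe_mem_centralArc {u : ℝ} :
    (u : UnitAddCircle) ∈ centralArc ↔ Int.fract u ∈ Ico (1 / 4 : ℝ) (3 / 4) := by
  rw [centralArc, mem_ofPred_eq, AddCircle.coe_equivIco_mk_apply, div_one, mul_one]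

theorem add_half_mem_centralArc {θ : UnitAddCircle} :
    θ + ((1 / 2 : ℝ) : UnitAddCircle) ∈ centralArc ↔ θ ∉ centralArc := by
  induction θ using QuotientAddGroup.induction_on with | H u
  rw [← AddCircle.coe_add, coe_mem_centralArc, coe_mem_centralArc, mem_Ico, mem_Ico]
  have h0 := Int.fract_nonneg u
  have h1 := Int.fract_lt_one u
  rcases lt_or_ge (Int.fract u) (1 / 2) with h | h
  · have hfract : Int.fract (u + 1 / 2) = Int.fract u + 1 / 2 :=
      Int.fract_eq_iff.2 ⟨by linarith, by linarith, ⌊u⌋, by linarith [Int.fract_add_floor u]⟩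
    grind
  · have hfract : Int.fract (u + 1 / 2) = Int.fract u - 1 / 2 :=
      Int.fract_eq_iff.2 ⟨by linarith, by linarith, ⌊u⌋ + 1, by
        push_cast; linarith [Int.fract_add_floor u]⟩
    grind

/-- The points of the circle that lie in the middle half of their dyadic arc of length `2⁻ⁿ`. -/
noncomputable def centralAt (n : ℕ) : Set UnitAddCircle :=
  {θ | 2 ^ n • θ ∈ centralArc}

theorem measurableSet_centralAt (n : ℕ) : MeasurableSet (centralAt n) :=
  measurableSet_centralArc.preimage (continuous_const_smul (2 ^ n)).measurable

theorem two_pow_smul_add_coe (n m : ℕ) (θ : UnitAddCircle) :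
    2 ^ m • (θ + ((1 / 2 ^ (n + 1) : ℝ) : UnitAddCircle)) =
      2 ^ m • θ + ((2 ^ m / 2 ^ (n + 1) : ℝ) : UnitAddCircle) := by
  rw [smul_add, ← AddCircle.coe_nsmul, nsmul_eq_mul, Nat.cast_pow, Nat.cast_ofNat, mul_one_div]

theorem preimage_add_centralAt_self (n : ℕ) :
    (· + ((1 / 2 ^ (n + 1) : ℝ) : UnitAddCircle)) ⁻¹' centralAt n = (centralAt n)ᶜ := by
  ext θ
  have hhalf : (2 ^ n / 2 ^ (n + 1) : ℝ) = 1 / 2 := by field_simp; ring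
  rw [mem_preimage, centralAt, mem_ofPred_eq, two_pow_smul_add_coe, hhalf]
  exact add_half_mem_centralArc

theorem preimage_add_centralAt_of_lt {n m : ℕ} (h : n < m) :
    (· + ((1 / 2 ^ (n + 1) : ℝ) : UnitAddCircle)) ⁻¹' centralAt m = centralAt m := by
  ext θ
  obtain ⟨k, rfl⟩ := Nat.exists_eq_add_of_lt h
  have hint : (2 ^ (n + k + 1) / 2 ^ (n + 1) : ℝ) = ((2 ^ k : ℕ) : ℝ) := by
    push_cast; field_simp; ring
  rw [mem_preimage, centralAt, mem_ofPred_eq, two_pow_smul_add_coe, hint,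
    (AddCircle.coe_eq_zero_iff 1).2 ⟨(2 ^ k : ℕ), by simp⟩, add_zero, mem_ofPred_eq]

theorem volume_centralAt (n : ℕ) : volume (centralAt n) = 1 / 2 := by
  have hdouble := two_mul_measure_inter_of_preimage_eq_compl
    (measurePreserving_add_right volume ((1 / 2 ^ (n + 1) : ℝ) : UnitAddCircle))
    (measurableSet_centralAt n) .univ (preimage_add_centralAt_self n) preimage_univ
  rw [inter_univ, UnitAddCircle.measure_univ] at hdouble
  rw [ENNReal.eq_div_iff two_ne_zero ENNReal.ofNat_ne_top, hdouble]

instance isProbabilityMeasure_volume_unitAddCircle :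
    IsProbabilityMeasure (volume : Measure UnitAddCircle) :=
  ⟨UnitAddCircle.measure_univ⟩

theorem pairwise_indepSet_centralAt :
    Pairwise fun n m => IndepSet (centralAt n) (centralAt m) volume := by
  have hlt {n m : ℕ} (h : n < m) : IndepSet (centralAt n) (centralAt m) volume :=
    indepSet_of_preimage_eq_compl
      (measurePreserving_add_right volume ((1 / 2 ^ (n + 1) : ℝ) : UnitAddCircle))
      (measurableSet_centralAt n) (measurableSet_centralAt m) (preimage_add_centralAt_self n)
      (preimage_add_centralAt_of_lt h)
  intro n m hnm
  exact hnm.lt_or_gt.elim hlt fun h => (hlt h).symm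

variable {ι : Type*}

/-- The points of the torus that lie in the central half of their dyadic cube of side `2⁻ⁿ`. -/
noncomputable def dyadicCore (ι : Type*) (n : ℕ) : Set (UnitAddTorus ι) :=
  univ.pi fun _ => centralAt n

theorem measurableSet_dyadicCore [Countable ι] (n : ℕ) : MeasurableSet (dyadicCore ι n) :=
  .univ_pi fun _ => measurableSet_centralAt n

theorem volume_real_dyadicCore [Fintype ι] (n : ℕ) :
    volume.real (dyadicCore ι n) = (1 / 2) ^ Fintype.card ι := by
  rw [measureReal_def, dyadicCore, volume_pi_pi]
  simp only [volume_centralAt, Finset.prod_const, Finset.card_univ, ENNReal.toReal_pow]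
  norm_num

theorem pairwise_indepSet_dyadicCore [Fintype ι] :
    Pairwise fun n m => IndepSet (dyadicCore ι n) (dyadicCore ι m) volume :=
  fun _ _ hnm => indepSet_univ_pi (fun _ => measurableSet_centralAt _)
    (fun _ => measurableSet_centralAt _) fun _ => pairwise_indepSet_centralAt hnm

theorem ae_mul_lowerDensity_le_add_mem_dyadicCore [Fintype ι] (a : UnitAddTorus ι) (A : Set ℕ) :
    ∀ᵐ θ : UnitAddTorus ι, (1 / 2) ^ Fintype.card ι * lowerDensity A ≤
      lowerDensity {i ∈ A | a + θ ∈ dyadicCore ι i} := by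
  have hshift := measurePreserving_add_left (volume : Measure (UnitAddTorus ι)) a
  refine ae_mul_lowerDensity_le_of_pairwise_indepSet
    (E := fun i => (a + ·) ⁻¹' dyadicCore ι i)
    (fun i => hshift.measurable (measurableSet_dyadicCore i))
    (fun i j hij => indepSet_preimage hshift (measurableSet_dyadicCore i)
      (measurableSet_dyadicCore j) (pairwise_indepSet_dyadicCore hij))
    (fun i => ?_) A
  rw [hshift.measureReal_preimage (measurableSet_dyadicCore i).nullMeasurableSet,
    volume_real_dyadicCore]

/-- The covering map from Euclidean space to the torus. -/
noncomputable def toUnitAddTorus (x : EuclideanSpace ℝ ι) : UnitAddTorus ι :=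
  fun k => (x k : UnitAddCircle)

theorem toUnitAddTorus_add (x y : EuclideanSpace ℝ ι) :
    toUnitAddTorus (x + y) = toUnitAddTorus x + toUnitAddTorus y :=
  funext fun k => AddCircle.coe_add _ (x k) (y k)

theorem toUnitAddTorus_mem_dyadicCore {x : EuclideanSpace ℝ ι} {n : ℕ} :
    toUnitAddTorus x ∈ dyadicCore ι n ↔
      ∀ k, Int.fract (2 ^ n * x k) ∈ Ico (1 / 4 : ℝ) (3 / 4) := by
  simp only [dyadicCore, mem_univ_pi, centralAt, mem_ofPred_eq, toUnitAddTorus,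
    ← AddCircle.coe_nsmul, coe_mem_centralArc, nsmul_eq_mul, Nat.cast_pow, Nat.cast_ofNat]

theorem measurable_toUnitAddTorus : Measurable (toUnitAddTorus (ι := ι)) :=
  measurable_pi_lambda _ fun k => AddCircle.measurable_mk'.comp (by fun_prop)

variable [Fintype ι]

theorem quasiMeasurePreserving_pi_coe_unitAddCircle :
    Measure.QuasiMeasurePreserving (fun (x : ι → ℝ) k => (x k : UnitAddCircle)) := by
  refine ⟨by fun_prop, Measure.AbsolutelyContinuous.mk fun s hs hs0 => ?_⟩
  rw [Measure.map_apply (by fun_prop) hs]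
  refine measure_null_of_locally_null _ fun x _ => ?_
  set box : Set (ι → ℝ) := univ.pi fun k => Ioc (x k - 1 / 2) (x k - 1 / 2 + 1)
  have hbox : box ∈ 𝓝 x := set_pi_mem_nhds finite_univ fun k _ =>
    Ioc_mem_nhds (by linarith) (by linarith)
  have hmk : MeasurePreserving (fun (y : ι → ℝ) k => (y k : UnitAddCircle))
      (volume.restrict box) := by
    rw [volume_pi, Measure.restrict_pi_pi]
    exact measurePreserving_pi _ _ fun k => UnitAddCircle.measurePreserving_mk (x k - 1 / 2)
  refine ⟨_ ∩ box, inter_mem self_mem_nhdsWithin (mem_nhdsWithin_of_mem_nhds hbox), ?_⟩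
  rw [← Measure.restrict_apply (hmk.measurable hs), hmk.measure_preimage hs.nullMeasurableSet, hs0]

theorem quasiMeasurePreserving_toUnitAddTorus :
    Measure.QuasiMeasurePreserving (toUnitAddTorus (ι := ι)) :=
  quasiMeasurePreserving_pi_coe_unitAddCircle.comp
    (PiLp.volume_preserving_ofLp ι).quasiMeasurePreserving

end Torus

section Holes

section PseudoMetricSpace

variable {X : Type*} [PseudoMetricSpace X] [MeasurableSpace X] {μ : Measure X}

theorem measure_ball_eq_iSup_lt (μ : Measure X) (x : X) (r : ℝ) :
    μ (ball x r) = ⨆ s : Iio r, μ (ball x s) := by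
  have : (atTop : Filter (Iio r)).IsCountablyGenerated := by
    rw [← comap_coe_Iio_nhdsLT]
    infer_instance
  have hmono : Monotone fun s : Iio r => ball x s := fun _ _ hst => ball_subset_ball hst
  rw [← hmono.measure_iUnion, ← biUnion_lt_ball x r, iUnion_subtype]
  rfl

theorem lowerSemicontinuous_measure_ball (μ : Measure X) (r : ℝ) :
    LowerSemicontinuous fun x => μ (ball x r) := by
  intro x c (hc : c < μ (ball x r))
  rw [measure_ball_eq_iSup_lt] at hc
  obtain ⟨⟨s, hs⟩, hcs⟩ := lt_iSup_iff.1 hc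
  filter_upwards [ball_mem_nhds x (sub_pos.2 hs)] with z hz
  rw [mem_ball'] at hz
  exact hcs.trans_le (measure_mono (ball_subset_ball' (by linarith)))

/-- The points `x` whose `r`-ball contains a hole of radius larger than `α r`, with all the
inequalities in the condition `α < porMeas μ x r ε` made strict. The set is then open, which makes
the condition jointly measurable in the point and the translation. -/
def strictHoleSet (μ : Measure X) (α ε r : ℝ) : Set X :=
  {x | ∃ y s, α * r < s ∧ dist x y + s < r ∧
    μ (ball y s) < ENNReal.ofReal ε * μ (ball x r)}

theorem isOpen_strictHoleSet (μ : Measure X) (α ε r : ℝ) : IsOpen (strictHoleSet μ α ε r) := by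
  have hlsc : LowerSemicontinuous fun x => ENNReal.ofReal ε * μ (ball x r) :=
    (ENNReal.continuous_const_mul ENNReal.ofReal_ne_top).comp_lowerSemicontinuous
      (lowerSemicontinuous_measure_ball μ r) fun _ _ h => mul_le_mul_right h _
  have hunion : strictHoleSet μ α ε r = ⋃ (y : X) (s : ℝ) (_ : α * r < s),
      {x | dist x y + s < r} ∩ {x | μ (ball y s) < ENNReal.ofReal ε * μ (ball x r)} := by
    ext x
    simp only [strictHoleSet, mem_ofPred_eq, mem_iUnion, mem_inter_iff, exists_prop]
  rw [hunion]
  exact isOpen_iUnion fun y => isOpen_iUnion fun s => isOpen_iUnion fun _ =>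
    (isOpen_lt (by fun_prop) continuous_const).inter (hlsc.isOpen_preimage _)

theorem strictHoleSet_mono {α ε δ r : ℝ} (h : ε ≤ δ) :
    strictHoleSet μ α ε r ⊆ strictHoleSet μ α δ r := by
  rintro x ⟨y, s, hs, hsr, hμ⟩
  exact ⟨y, s, hs, hsr, hμ.trans_le (by gcongr)⟩

end PseudoMetricSpace

section NormedSpace

variable {E : Type*} [NormedAddCommGroup E] [NormedSpace ℝ E] [Nontrivial E]

theorem exists_norm_eq_sameRay (v : E) {c : ℝ} (hc : 0 ≤ c) : ∃ w : E, ‖w‖ = c ∧ SameRay ℝ v w := by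
  rcases eq_or_ne v 0 with rfl | hv
  · exact (exists_norm_eq E hc).imp fun w hw => ⟨hw, .zero_left w⟩
  · refine ⟨(c / ‖v‖) • v, ?_, .sameRay_nonneg_smul_right v (by positivity)⟩
    rw [norm_smul, Real.norm_of_nonneg (by positivity), div_mul_cancel₀ _ (norm_ne_zero_iff.2 hv)]

theorem dist_add_le_of_ball_subset_ball {x y : E} {s r : ℝ} (hs : 0 < s)
    (h : ball y s ⊆ ball x r) : dist x y + s ≤ r := by
  obtain ⟨w, hw, hray⟩ := exists_norm_eq_sameRay (y - x) hs.le
  have hmem : y + w ∈ closedBall x r := by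
    refine closure_ball_subset_closedBall (closure_mono h ?_)
    rw [closure_ball y hs.ne', mem_closedBall, dist_eq_norm, add_sub_cancel_left, hw]
  rwa [mem_closedBall, dist_eq_norm, add_sub_right_comm, hray.norm_add, hw, ← dist_eq_norm,
    dist_comm] at hmem

theorem mem_strictHoleSet_of_lt_porMeas [MeasurableSpace E] [ProperSpace E] {μ : Measure E}
    [IsLocallyFiniteMeasure μ] {α r ε δ : ℝ} {x : E} (hα : 0 ≤ α) (hr : 0 < r) (hδ : 0 < δ)
    (hεδ : ε < δ) (hx : x ∈ μ.support) (h : α < porMeas μ x r ε) :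
    x ∈ strictHoleSet μ α δ r := by
  have hne : ∃ α' : ℝ, 0 ≤ α' ∧ ∃ y, ball y (α' * r) ⊆ ball x r ∧
      μ (ball y (α' * r)) ≤ ENNReal.ofReal ε * μ (ball x r) :=
    ⟨0, le_rfl, x, by simp, by simp⟩
  obtain ⟨α', ⟨-, y, hsub, hle⟩, hlt⟩ := exists_lt_of_lt_csSup hne h
  have hαr : α * r < α' * r := mul_lt_mul_of_pos_right hlt hr
  have hdist := dist_add_le_of_ball_subset_ball ((mul_nonneg hα hr.le).trans_lt hαr) hsub
  obtain ⟨s, hαs, hsα'⟩ := exists_between hαr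
  have hpos : μ (ball x r) ≠ 0 :=
    ((Measure.mem_support_iff_forall x).1 hx _ (ball_mem_nhds x hr)).ne'
  refine ⟨y, s, hαs, by linarith, ?_⟩
  calc μ (ball y s) ≤ μ (ball y (α' * r)) := measure_mono (ball_subset_ball hsα'.le)
    _ ≤ ENNReal.ofReal ε * μ (ball x r) := hle
    _ < ENNReal.ofReal δ * μ (ball x r) :=
      ENNReal.mul_lt_mul_left hpos measure_ball_lt_top.ne ((ENNReal.ofReal_lt_ofReal_iff hδ).2 hεδ)

end NormedSpace

/- In `IsMeanPorous` the index `i` is elaborated as an integer, so that `Finset.range n` is coerced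
to `Finset ℤ` through the monad structure of `Finset`. -/
theorem card_filter_range_cast (n : ℕ) (P : ℤ → Prop) :
    (Finset.filter P (do let a ← Finset.range n; pure (a : ℤ))).card =
      {i ∈ Finset.range n | P (i : ℕ)}.card := by
  have himage : (do let a ← Finset.range n; pure (a : ℤ) : Finset ℤ) =
      (Finset.range n).image (Nat.cast : ℕ → ℤ) := by
    ext z
    simp [Finset.bind_def, eq_comm]
  rw [himage, Finset.filter_image, Finset.card_image_of_injective _ Nat.cast_injective]

theorem isMeanPorous_iff {X : Type*} [MetricSpace X] [MeasurableSpace X] {μ : Measure X}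
    {α ρ : ℝ} :
    IsMeanPorous μ α ρ ↔ ∀ ε : ℝ, 0 < ε → ∀ᵐ x ∂μ,
      ρ ≤ lowerDensity {i : ℕ | α < porMeas μ x ((2 : ℝ) ^ (-(i : ℤ))) ε} := by
  refine forall_congr' fun ε => forall_congr' fun _ => eventually_congr (.of_forall fun x => ?_)
  simp only [lowerDensity, relFreq_setOf, card_filter_range_cast]

end Holes

section DyadicCubes

theorem floor_eq_floor_of_fract_mem_Ico {a b : ℝ} (ha : Int.fract a ∈ Ico (1 / 4 : ℝ) (3 / 4))
    (hab : |b - a| < 1 / 4) : ⌊b⌋ = ⌊a⌋ := by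
  have hfloor := Int.fract_add_floor a
  obtain ⟨hlow, hupp⟩ := abs_lt.1 hab
  exact Int.floor_eq_iff.2 ⟨by linarith [ha.1], by linarith [ha.2]⟩

theorem dist_le_sqrt_card_mul {ι : Type*} [Fintype ι] {x y : EuclideanSpace ℝ ι}
    {c : ℝ} (hc : 0 ≤ c) (h : ∀ k, dist (x k) (y k) ≤ c) :
    dist x y ≤ Real.sqrt (Fintype.card ι) * c := by
  calc dist x y = Real.sqrt (∑ k, dist (x k) (y k) ^ 2) := EuclideanSpace.dist_eq x y
    _ ≤ Real.sqrt (∑ _k : ι, c ^ 2) := by gcongr with k; exact h k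
    _ = Real.sqrt (Fintype.card ι) * c := by
      rw [Finset.sum_const, Finset.card_univ, nsmul_eq_mul, Real.sqrt_mul (by positivity),
        Real.sqrt_sq hc]

variable {d : ℕ}

theorem mem_dyadicCell_iff {n : ℕ} {j : Fin d → ℤ} {y : EuclideanSpace ℝ (Fin d)} :
    y ∈ dyadicCell d n j ↔ dyadicIdx d n y = j := by
  simp only [dyadicCell, mem_ofPred_eq, funext_iff, dyadicIdx, Int.floor_eq_iff,
    div_le_iff₀' (show (0 : ℝ) < 2 ^ n by positivity),
    lt_div_iff₀' (show (0 : ℝ) < 2 ^ n by positivity)]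

theorem mem_Qcube_iff {n : ℕ} {x y : EuclideanSpace ℝ (Fin d)} :
    y ∈ Qcube d n x ↔ dyadicIdx d n y = dyadicIdx d n x :=
  mem_dyadicCell_iff

theorem dyadicIdx_add_ediv (n l : ℕ) (x : EuclideanSpace ℝ (Fin d)) (k : Fin d) :
    dyadicIdx d (n + l) x k / 2 ^ l = dyadicIdx d n x k := by
  have hdiv : (2 : ℝ) ^ n * x k = 2 ^ (n + l) * x k / (2 ^ l : ℕ) := by
    push_cast; field_simp; ring
  rw [dyadicIdx, dyadicIdx, hdiv, Int.floor_div_natCast, Nat.cast_pow, Nat.cast_ofNat]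

theorem Qcube_subset_closedBall (n : ℕ) (x : EuclideanSpace ℝ (Fin d)) :
    Qcube d n x ⊆ closedBall x (Real.sqrt d / 2 ^ n) := by
  intro y hy
  have hcoord (k : Fin d) : dist (y k) (x k) ≤ 1 / 2 ^ n := by
    have hfloor := Int.abs_sub_lt_one_of_floor_eq_floor (congr_fun (mem_Qcube_iff.1 hy) k)
    rw [← mul_sub, abs_mul, abs_of_pos (by positivity)] at hfloor
    rw [Real.dist_eq, le_div_iff₀' (by positivity)]
    exact hfloor.le
  have hdist := dist_le_sqrt_card_mul (by positivity) hcoord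
  rwa [Fintype.card_fin, mul_one_div] at hdist

theorem ball_subset_Qcube {n : ℕ} {x : EuclideanSpace ℝ (Fin d)}
    (hx : toUnitAddTorus x ∈ dyadicCore (Fin d) n) :
    ball x (1 / 2 ^ n / 4) ⊆ Qcube d n x := by
  intro y hy
  refine mem_Qcube_iff.2 (funext fun k => floor_eq_floor_of_fract_mem_Ico
    (toUnitAddTorus_mem_dyadicCore.1 hx k) ?_)
  rw [mem_ball, div_right_comm] at hy
  rw [← mul_sub, abs_mul, abs_of_pos (by positivity), ← lt_div_iff₀' (by positivity),
    ← Real.dist_eq]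
  exact (PiLp.dist_apply_le y x k).trans_lt hy

theorem por2_le_of_measure_Qcube_le {ν : Measure (EuclideanSpace ℝ (Fin d))} {n l : ℕ} {ε : ℝ}
    {x y : EuclideanSpace ℝ (Fin d)} (hy : y ∈ Qcube d n x)
    (h : ν (Qcube d (n + l) y) ≤ ENNReal.ofReal ε * ν (Qcube d n x)) :
    por2 d ν x n ε ≤ l := by
  have hpos : (0 : ℤ) < 2 ^ l := by positivity
  have hidx (k : Fin d) : dyadicIdx d (n + l) y k =
      2 ^ l * dyadicIdx d n x k + ((dyadicIdx d (n + l) y k % 2 ^ l).toNat : ℤ) := by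
    rw [Int.toNat_of_nonneg (Int.emod_nonneg _ hpos.ne'), ← mem_Qcube_iff.1 hy,
      ← dyadicIdx_add_ediv n l y k, Int.mul_ediv_add_emod]
  refine Nat.sInf_le ⟨fun k => ⟨(dyadicIdx d (n + l) y k % 2 ^ l).toNat, ?_⟩, ?_⟩
  · rw [Int.toNat_lt (Int.emod_nonneg _ hpos.ne')]
    exact_mod_cast Int.emod_lt_of_pos _ hpos
  · rwa [← funext hidx]

theorem measurableEmbedding_inv_four_smul_add (t : EuclideanSpace ℝ (Fin d)) :
    MeasurableEmbedding fun x : EuclideanSpace ℝ (Fin d) => (4 : ℝ)⁻¹ • x + t :=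
  ((Homeomorph.smulOfNeZero (4 : ℝ)⁻¹ (by norm_num)).trans
    (Homeomorph.addRight t)).measurableEmbedding

theorem dist_inv_four_smul_add (t x y : EuclideanSpace ℝ (Fin d)) :
    dist ((4 : ℝ)⁻¹ • x + t) ((4 : ℝ)⁻¹ • y + t) = dist x y / 4 := by
  rw [dist_add_right, dist_smul₀, Real.norm_of_nonneg (by norm_num), inv_mul_eq_div]

theorem ball_subset_preimage_Qcube {n : ℕ} {x t : EuclideanSpace ℝ (Fin d)}
    (hcore : toUnitAddTorus ((4 : ℝ)⁻¹ • x + t) ∈ dyadicCore (Fin d) n) :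
    ball x (1 / 2 ^ n) ⊆ (fun z => (4 : ℝ)⁻¹ • z + t) ⁻¹' Qcube d n ((4 : ℝ)⁻¹ • x + t) := by
  intro z hz
  apply ball_subset_Qcube hcore
  rw [mem_ball, dist_inv_four_smul_add]
  exact div_lt_div_of_pos_right hz four_pos

theorem preimage_Qcube_subset_closedBall (n : ℕ) (y t : EuclideanSpace ℝ (Fin d)) :
    (fun z => (4 : ℝ)⁻¹ • z + t) ⁻¹' Qcube d n ((4 : ℝ)⁻¹ • y + t) ⊆
      closedBall y (4 * Real.sqrt d / 2 ^ n) := by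
  intro z hz
  have hdist := Qcube_subset_closedBall n _ hz
  rwa [mem_closedBall, dist_inv_four_smul_add, div_le_iff₀' four_pos, ← mul_div_assoc] at hdist

theorem por2_map_le {μ : Measure (EuclideanSpace ℝ (Fin d))} {α ε : ℝ} {i l : ℕ}
    {x t : EuclideanSpace ℝ (Fin d)} (hl : 4 * Real.sqrt d ≤ α * 2 ^ l)
    (hx : x ∈ strictHoleSet μ α ε ((2 : ℝ) ^ (-(i : ℤ))))
    (hcore : toUnitAddTorus ((4 : ℝ)⁻¹ • x + t) ∈ dyadicCore (Fin d) i) :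
    por2 d (Measure.map (fun z => (4 : ℝ)⁻¹ • z + t) μ) ((4 : ℝ)⁻¹ • x + t) i ε ≤ l := by
  obtain ⟨y, s, hs, hsr, hμ⟩ := hx
  rw [zpow_neg, zpow_natCast, ← one_div] at hs hsr hμ
  have hradius : 4 * Real.sqrt d / 2 ^ (i + l) < s := by
    calc 4 * Real.sqrt d / 2 ^ (i + l) ≤ α * 2 ^ l / 2 ^ (i + l) := by gcongr
      _ = α * (1 / 2 ^ i) := by rw [pow_add]; field_simp
      _ < s := hs
  have hs0 : 0 < s := lt_of_le_of_lt (by positivity) hradius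
  have hy : y ∈ ball x (1 / 2 ^ i) := mem_ball'.2 (by linarith)
  have hemb := measurableEmbedding_inv_four_smul_add t
  refine por2_le_of_measure_Qcube_le (ball_subset_preimage_Qcube hcore hy) ?_
  rw [hemb.map_apply, hemb.map_apply]
  calc μ ((fun z => (4 : ℝ)⁻¹ • z + t) ⁻¹' Qcube d (i + l) ((4 : ℝ)⁻¹ • y + t))
      ≤ μ (ball y s) := measure_mono
        ((preimage_Qcube_subset_closedBall _ y t).trans (closedBall_subset_ball hradius))
    _ ≤ ENNReal.ofReal ε * μ (ball x (1 / 2 ^ i)) := hμ.le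
    _ ≤ ENNReal.ofReal ε *
        μ ((fun z => (4 : ℝ)⁻¹ • z + t) ⁻¹' Qcube d i ((4 : ℝ)⁻¹ • x + t)) := by
      gcongr
      exact ball_subset_preimage_Qcube hcore

theorem four_mul_sqrt_le_mul_two_pow_ceil (hd : 0 < d) {α : ℝ} (hα : 0 < α) :
    4 * Real.sqrt d ≤ α * 2 ^ ⌈|Real.logb 2 (α / (4 * Real.sqrt d))|⌉₊ := by
  set q := α / (4 * Real.sqrt d) with hq
  have hq0 : 0 < q := by positivity
  have hlog : Real.logb 2 q⁻¹ ≤ (⌈|Real.logb 2 q|⌉₊ : ℝ) := by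
    rw [Real.logb_inv]
    exact (neg_le_abs _).trans (Nat.le_ceil _)
  rw [Real.logb_le_iff_le_rpow one_lt_two (inv_pos.2 hq0), Real.rpow_natCast, hq, inv_div,
    div_le_iff₀' hα] at hlog
  exact hlog

end DyadicCubes

section RandomTranslation

theorem measurableSet_le_lowerDensity_mem_and_add_mem_dyadicCore {ι Ω : Type*} [Countable ι]
    [MeasurableSpace Ω] {H : ℕ → Set Ω} (hH : ∀ i, MeasurableSet (H i)) {f : Ω → UnitAddTorus ι}
    (hf : Measurable f) (a : ℝ) :
    MeasurableSet {q : Ω × UnitAddTorus ι |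
      a ≤ lowerDensity {i | q.1 ∈ H i ∧ f q.1 + q.2 ∈ dyadicCore ι i}} := by
  refine measurableSet_le measurable_const (measurable_lowerDensity_setOf_mem
    (G := fun i => {q : Ω × UnitAddTorus ι | q.1 ∈ H i ∧ f q.1 + q.2 ∈ dyadicCore ι i}) fun i => ?_)
  exact (measurable_fst (hH i)).inter
    (((hf.comp measurable_fst).add measurable_snd) (measurableSet_dyadicCore i))

theorem ae_ae_le_lowerDensity_mem_and_add_mem_dyadicCore {ι Ω : Type*} [Fintype ι]
    [MeasurableSpace Ω] {μ : Measure Ω} [SFinite μ] {H : ℕ → Set Ω}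
    (hH : ∀ i, MeasurableSet (H i)) {f : Ω → UnitAddTorus ι} (hf : Measurable f) {ρ : ℝ}
    (hρ : ∀ᵐ x ∂μ, ρ ≤ lowerDensity {i | x ∈ H i}) :
    ∀ᵐ θ : UnitAddTorus ι, ∀ᵐ x ∂μ, (1 / 2) ^ Fintype.card ι * ρ ≤
      lowerDensity {i | x ∈ H i ∧ f x + θ ∈ dyadicCore ι i} := by
  rw [← Measure.ae_ae_comm (measurableSet_le_lowerDensity_mem_and_add_mem_dyadicCore hH hf _)]
  filter_upwards [hρ] with x hx
  filter_upwards [ae_mul_lowerDensity_le_add_mem_dyadicCore (f x) {i | x ∈ H i}] with θ hθ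
  exact (mul_le_mul_of_nonneg_left hx (by positivity)).trans hθ

variable {d : ℕ} {μ : Measure (EuclideanSpace ℝ (Fin d))} {α ρ : ℝ}

theorem isDyadicMeanPorous_iff {l : ℕ} :
    IsDyadicMeanPorous d μ l ρ ↔ ∀ ε : ℝ, 0 < ε → ∀ᵐ x ∂μ,
      ρ ≤ lowerDensity {i | por2 d μ x i ε ≤ l} := by
  refine forall_congr' fun ε => forall_congr' fun _ => eventually_congr (.of_forall fun x => ?_)
  rw [lowerDensity, relFreq_setOf]

theorem IsMeanPorous.ae_le_lowerDensity_strictHoleSet [IsLocallyFiniteMeasure μ] (hd : 0 < d)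
    (hα : 0 ≤ α) (hpor : IsMeanPorous μ α ρ) {ε : ℝ} (hε : 0 < ε) :
    ∀ᵐ x ∂μ, ρ ≤ lowerDensity {i : ℕ | x ∈ strictHoleSet μ α ε ((2 : ℝ) ^ (-(i : ℤ)))} := by
  have : NeZero d := ⟨hd.ne'⟩
  filter_upwards [isMeanPorous_iff.1 hpor (ε / 2) (half_pos hε), Measure.support_mem_ae]
    with x hx hsupp
  exact hx.trans <| lowerDensity_mono fun i hi =>
    mem_strictHoleSet_of_lt_porMeas hα (by positivity) hε (half_lt_self hε) hsupp hi

theorem IsMeanPorous.ae_ae_le_lowerDensity_strictHoleSet_dyadicCore [IsLocallyFiniteMeasure μ]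
    (hd : 0 < d) (hα : 0 ≤ α) (hpor : IsMeanPorous μ α ρ) {ε : ℝ} (hε : 0 < ε) :
    ∀ᵐ t : EuclideanSpace ℝ (Fin d), ∀ᵐ x ∂μ, (1 / 2) ^ d * ρ ≤
      lowerDensity {i : ℕ | x ∈ strictHoleSet μ α ε ((2 : ℝ) ^ (-(i : ℤ))) ∧
        toUnitAddTorus ((4 : ℝ)⁻¹ • x + t) ∈ dyadicCore (Fin d) i} := by
  have htorus := ae_ae_le_lowerDensity_mem_and_add_mem_dyadicCore
    (H := fun i : ℕ => strictHoleSet μ α ε ((2 : ℝ) ^ (-(i : ℤ))))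
    (f := fun x => toUnitAddTorus ((4 : ℝ)⁻¹ • x))
    (fun i => (isOpen_strictHoleSet μ α ε _).measurableSet)
    (measurable_toUnitAddTorus.comp (measurable_const_smul _))
    (hpor.ae_le_lowerDensity_strictHoleSet hd hα hε)
  simpa only [← toUnitAddTorus_add, Fintype.card_fin] using
    quasiMeasurePreserving_toUnitAddTorus.ae htorus

theorem stmt11_general (d : ℕ) (hd : 0 < d) (α ρ : ℝ) (hα : 0 < α)
    (μ : Measure (EuclideanSpace ℝ (Fin d))) [IsLocallyFiniteMeasure μ]
    (hpor : IsMeanPorous μ α ρ) :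
    ∀ᵐ t : EuclideanSpace ℝ (Fin d),
      IsDyadicMeanPorous d
        (Measure.map (fun x : EuclideanSpace ℝ (Fin d) => (4 : ℝ)⁻¹ • x + t) μ)
        (⌈|Real.logb 2 (α / (4 * Real.sqrt d))|⌉₊)
        ((2 : ℝ) ^ (-(d : ℤ)) * ρ) := by
  have hpow : (2 : ℝ) ^ (-(d : ℤ)) = (1 / 2) ^ d := by
    rw [zpow_neg, zpow_natCast, one_div, inv_pow]
  have hcountable : ∀ᵐ t : EuclideanSpace ℝ (Fin d), ∀ m : ℕ, ∀ᵐ x ∂μ, (1 / 2) ^ d * ρ ≤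
      lowerDensity {i : ℕ | x ∈ strictHoleSet μ α (1 / (m + 1)) ((2 : ℝ) ^ (-(i : ℤ))) ∧
        toUnitAddTorus ((4 : ℝ)⁻¹ • x + t) ∈ dyadicCore (Fin d) i} :=
    ae_all_iff.2 fun m =>
      hpor.ae_ae_le_lowerDensity_strictHoleSet_dyadicCore hd hα.le (by positivity)
  filter_upwards [hcountable] with t ht
  refine isDyadicMeanPorous_iff.2 fun ε hε => ?_
  obtain ⟨m, hm⟩ := exists_nat_one_div_lt hε
  rw [(measurableEmbedding_inv_four_smul_add t).ae_map_iff, hpow]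
  filter_upwards [ht m] with x hx
  exact hx.trans <| lowerDensity_mono fun i hi =>
    por2_map_le (four_mul_sqrt_le_mul_two_pow_ceil hd hα) (strictHoleSet_mono hm.le hi.1) hi.2

end RandomTranslation

/-- If `μ` is a mean `(α,ρ)`-porous Borel probability measure on
`[0,1)^d`, then for Lebesgue-almost every `t ∈ [0,1/2)^d` the measure `(1/4)μ + t`
(the image of `μ` under `x ↦ x/4 + t`) is dyadic mean `(ℓ, 2^{−d}ρ)`-porous with
`ℓ = ⌈|log₂(α/(4√d))|⌉`. -/
theorem stmt11 (d : ℕ) (hd : 0 < d) (α ρ : ℝ)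
    (hα : α ∈ Set.Ioc (0 : ℝ) (1 / 2)) (hρ : ρ ∈ Set.Ioc (0 : ℝ) 1)
    (μ : Measure (EuclideanSpace ℝ (Fin d))) [IsProbabilityMeasure μ]
    (hsupp : μ (unitCube d) = 1) (hpor : IsMeanPorous μ α ρ) :
    ∀ᵐ t ∂(volume.restrict (dyadicCell d 1 0)),
      IsDyadicMeanPorous d
        (Measure.map (fun x : EuclideanSpace ℝ (Fin d) => (4 : ℝ)⁻¹ • x + t) μ)
        (⌈|Real.logb 2 (α / (4 * Real.sqrt d))|⌉₊)
        ((2 : ℝ) ^ (-(d : ℤ)) * ρ) := by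
  exact ae_restrict_of_ae (stmt11_general d hd α ρ hα.1 μ hpor)
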